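/- Let m ≥ k ≥ 1 be integers. Then ∂^j([m]^k) = [m−j]^k for all 0 ≤ j ≤ m−k, and the Burge code of the almost rectangular partition [m]^k is α^{m−k} β^{k} α. -/

import Mathlib

open Polynomial

noncomputable section

/-- The quotient module `F[t]/(t^m)`. -/
abbrev PQ (F : Type*) [Field F] (m : ℕ) : Type _ := F[X] ⧸ Ideal.span {(X : F[X]) ^ m}

variable (F : Type*) [Field F]

lemma mulQ_cond (m m' : ℕ) (c : F[X]) (h : (X : F[X]) ^ m' ∣ c * X ^ m) :
    Ideal.span {(X : F[X]) ^ m} ≤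
      Submodule.comap (LinearMap.mulLeft F[X] c) (Ideal.span {(X : F[X]) ^ m'}) := by
  rw [Ideal.span_le]
  intro x hx
  rw [Set.mem_singleton_iff] at hx
  subst hx
  simp only [SetLike.mem_coe, Submodule.mem_comap, LinearMap.mulLeft_apply]
  exact Ideal.mem_span_singleton.mpr h

/-- The `F`-linear map `F[t]/(t^m) → F[t]/(t^{m'})` induced by multiplication by the
polynomial `c`, well-defined whenever `t^{m'} ∣ c · t^m`. -/
def mulQ (m m' : ℕ) (c : F[X]) (h : (X : F[X]) ^ m' ∣ c * X ^ m) :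
    PQ F m →ₗ[F] PQ F m' :=
  LinearMap.restrictScalars F
    (Submodule.mapQ (Ideal.span {(X : F[X]) ^ m}) (Ideal.span {(X : F[X]) ^ m'})
      (LinearMap.mulLeft F[X] c) (mulQ_cond F m m' c h))

lemma dvd_A (u : ℕ) (c : F[X]) : (X : F[X]) ^ u ∣ c * X ^ u := Dvd.intro c (mul_comm _ _)

lemma dvd_G (u r : ℕ) (hru : r ≤ u) (g : F[X]) :
    (X : F[X]) ^ u ∣ (X ^ r * g) * X ^ (u - r) := by
  refine Dvd.intro g ?_
  rw [mul_comm ((X:F[X])^r) g, mul_assoc, ← pow_add, Nat.add_sub_cancel' hru, mul_comm]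

lemma dvd_H (u r : ℕ) (h : F[X]) : (X : F[X]) ^ (u - r) ∣ h * X ^ u :=
  Dvd.dvd.mul_left (pow_dvd_pow _ (Nat.sub_le u r)) h

/-- The `F[t]`-module endomorphism of `V = F[t]/(t^u) ⊕ t^r·F[t]/(t^u)` given by
`M(v₁, v₂) = (a v₁ + g v₂, h t^r v₁ + b v₂)`, where the second summand
`t^r·F[t]/(t^u)` is identified with `F[t]/(t^{u-r})` via `w ↦ t^r w`
(so the lower-left entry becomes `v₁ ↦ h v₁ mod t^{u-r}` and the upper-right
entry becomes `w ↦ t^r g w mod t^u`). -/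
def Mmap (u r : ℕ) (hru : r ≤ u) (a g h b : F[X]) :
    (PQ F u × PQ F (u - r)) →ₗ[F] (PQ F u × PQ F (u - r)) :=
  LinearMap.prod
    ((mulQ F u u a (dvd_A F u a)).comp (LinearMap.fst F (PQ F u) (PQ F (u - r))) +
      (mulQ F (u - r) u (X ^ r * g) (dvd_G F u r hru g)).comp
        (LinearMap.snd F (PQ F u) (PQ F (u - r))))
    ((mulQ F u (u - r) h (dvd_H F u r h)).comp (LinearMap.fst F (PQ F u) (PQ F (u - r))) +
      (mulQ F (u - r) (u - r) b (dvd_A F (u - r) b)).comp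
        (LinearMap.snd F (PQ F u) (PQ F (u - r))))

/-- `B` has Jordan type `P` (a partition given as the multiset of its parts):
the corank of every power of `B` is the one prescribed by `P`, i.e.
`dim ker (B^s) = Σ_i min(pᵢ, s)` for all `s ≥ 0`. -/
def JordanTypeIs {V : Type*} [AddCommGroup V] [Module F V] (B : Module.End F V)
    (P : Multiset ℕ) : Prop :=
  ∀ s : ℕ, Module.finrank F (LinearMap.ker (B ^ s)) = (P.map fun p => min p s).sum

/-- Index type for the `N = 4u-3r-2` coordinates
`(a_1,…,a_{u−1}, b_1,…,b_{u−r−1}, g_0,…,g_{u−r−1}, h_0,…,h_{u−r−1})`. -/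
abbrev Vars (u r : ℕ) : Type := Fin (u - 1) ⊕ Fin (u - r - 1) ⊕ Fin (u - r) ⊕ Fin (u - r)

/-- `a = Σ_{i=1}^{u−1} a_i t^i`. -/
def paOf (u r : ℕ) (x : Vars u r → F) : F[X] :=
  ∑ i : Fin (u - 1), C (x (Sum.inl i)) * X ^ ((i : ℕ) + 1)

/-- `b = Σ_{i=1}^{u−r−1} b_i t^i`. -/
def pbOf (u r : ℕ) (x : Vars u r → F) : F[X] :=
  ∑ i : Fin (u - r - 1), C (x (Sum.inr (Sum.inl i))) * X ^ ((i : ℕ) + 1)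

/-- `g = Σ_{i=0}^{u−r−1} g_i t^i`. -/
def pgOf (u r : ℕ) (x : Vars u r → F) : F[X] :=
  ∑ i : Fin (u - r), C (x (Sum.inr (Sum.inr (Sum.inl i)))) * X ^ (i : ℕ)

/-- `h = Σ_{i=0}^{u−r−1} h_i t^i`. -/
def phOf (u r : ℕ) (x : Vars u r → F) : F[X] :=
  ∑ i : Fin (u - r), C (x (Sum.inr (Sum.inr (Sum.inr i)))) * X ^ (i : ℕ)

/-- The nilpotent endomorphism `M_x` of `V` determined by the point `x ∈ F^N`. -/
def Mx (u r : ℕ) (hru : r ≤ u) (x : Vars u r → F) :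
    Module.End F (PQ F u × PQ F (u - r)) :=
  Mmap F u r hru (paOf F u r x) (pgOf F u r x) (phOf F u r x) (pbOf F u r x)

/-- The variable `a_i` as a polynomial function on `F^N` (meaningful for `1 ≤ i ≤ u-1`). -/
def Av (u r : ℕ) (i : ℕ) : MvPolynomial (Vars u r) F :=
  if h : i - 1 < u - 1 then MvPolynomial.X (Sum.inl ⟨i - 1, h⟩) else 0

/-- The variable `b_i` as a polynomial function on `F^N` (meaningful for `1 ≤ i ≤ u-r-1`). -/
def Bv (u r : ℕ) (i : ℕ) : MvPolynomial (Vars u r) F :=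
  if h : i - 1 < u - r - 1 then MvPolynomial.X (Sum.inr (Sum.inl ⟨i - 1, h⟩)) else 0

/-- The variable `g_i` as a polynomial function on `F^N` (meaningful for `0 ≤ i ≤ u-r-1`). -/
def Gv (u r : ℕ) (i : ℕ) : MvPolynomial (Vars u r) F :=
  if h : i < u - r then MvPolynomial.X (Sum.inr (Sum.inr (Sum.inl ⟨i, h⟩))) else 0

/-- The variable `h_i` as a polynomial function on `F^N` (meaningful for `0 ≤ i ≤ u-r-1`). -/
def Hv (u r : ℕ) (i : ℕ) : MvPolynomial (Vars u r) F :=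
  if h : i < u - r then MvPolynomial.X (Sum.inr (Sum.inr (Sum.inr ⟨i, h⟩))) else 0

/-- The set of polynomials `E^Q_{k,l}` for `Q = (u, u-r)`:
`{a_1,…,a_{k−1}, b_1,…,b_{l−1}}` if `k+l ≤ r`, and
`{a_1,…,a_{k−1}, b_1,…,b_{r−k−1}}` together with the quadratic polynomials
`Σ_{j=0}^{m} a_{k+j} b_{r−k+m−j} − Σ_{j=0}^{m} g_j h_{m−j}` for `0 ≤ m ≤ k+l−r−1`
if `k+l ≥ r+1`. -/
def Eset (u r k l : ℕ) : Set (MvPolynomial (Vars u r) F) :=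
  if k + l ≤ r then
    {p | ∃ i, 1 ≤ i ∧ i ≤ k - 1 ∧ p = Av F u r i} ∪
      {p | ∃ i, 1 ≤ i ∧ i ≤ l - 1 ∧ p = Bv F u r i}
  else
    {p | ∃ i, 1 ≤ i ∧ i ≤ k - 1 ∧ p = Av F u r i} ∪
      {p | ∃ i, 1 ≤ i ∧ i ≤ r - k - 1 ∧ p = Bv F u r i} ∪
      {p | ∃ m, m ≤ k + l - r - 1 ∧ p =
        (∑ j ∈ Finset.range (m + 1), Av F u r (k + j) * Bv F u r (r - k + m - j)) -
          (∑ j ∈ Finset.range (m + 1), Gv F u r j * Hv F u r (m - j))}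

/-- The common zero locus in `F^N` of a set `T` of polynomials. -/
def zLocus (u r : ℕ) (T : Set (MvPolynomial (Vars u r) F)) : Set (Vars u r → F) :=
  {x | ∀ p ∈ T, MvPolynomial.eval x p = 0}

/-- `X^Q_{k,l}`, the common zero locus of `E^Q_{k,l}`. -/
def Xlocus (u r k l : ℕ) : Set (Vars u r → F) := zLocus F u r (Eset F u r k l)

/-- Zariski-closed subsets of `F^N`: common zero loci of sets of polynomials. -/
def IsZClosed (u r : ℕ) (S : Set (Vars u r → F)) : Prop :=
  ∃ T : Set (MvPolynomial (Vars u r) F), S = zLocus F u r T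

/-- The Zariski closure of a subset of `F^N`. -/
def zClosure (u r : ℕ) (S : Set (Vars u r → F)) : Set (Vars u r → F) :=
  ⋂₀ {C | IsZClosed F u r C ∧ S ⊆ C}

end

section Burge

/-- Scanning the frequency sequence `f` downward from `j`, forming backward pairs:
whenever `f j > 0` (and `j` has not been consumed by a previously formed pair),
put `j` in the set and consume the index `j - 1`. -/
def RsetGo (f : ℕ → ℕ) : ℕ → Finset ℕ
  | 0 => ∅
  | 1 => if 0 < f 1 then {1} else ∅
  | (j + 2) => if 0 < f (j + 2) then insert (j + 2) (RsetGo f j) else RsetGo f (j + 1)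

/-- The set `R(P)` of a partition `P` (given as the multiset of its parts, with
frequency sequence `j ↦ P.count j`); the scan starts at the largest part `P.sup`. -/
def Rset (P : Multiset ℕ) : Finset ℕ := RsetGo (fun j => P.count j) P.sup

/-- The partition `∂P`: for each `j ∈ R(P)` one copy of the part `j` is replaced by
`j - 1` (discarded when `j - 1 = 0`). -/
def dP (P : Multiset ℕ) : Multiset ℕ :=
  (P - (Rset P).val) + (((Rset P).val.map fun j => j - 1).filter fun j => 0 < j)

/-- Fuel-driven computation of the Burge code; `false` stands for `α`, `true` for `β`.
(The fuel `P.sum + 1` used in `burgeCode` always suffices, since `∂` strictly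
decreases the size of a nonempty partition.) -/
def burgeGo : ℕ → Multiset ℕ → List Bool
  | 0, _ => []
  | (n + 1), P =>
    if P = 0 then [false]
    else (if 1 ∈ Rset P then true else false) :: burgeGo n (dP P)

/-- The Burge code of the partition `P`: the word `w_1 ⋯ w_m` with `w_i = β` (`true`)
if `∂^{i-1} P` is in class `B` (i.e. `1 ∈ R(∂^{i-1}P)`) and `w_i = α` (`false`)
otherwise, where `m = min { i : ∂^{i-1} P = (0) }`. -/
def burgeCode (P : Multiset ℕ) : List Bool := burgeGo (P.sum + 1) P

/-- The almost rectangular partition `[m]^k` of `m` into `k` parts, each equal to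
`⌈m/k⌉` or `⌊m/k⌋`. -/
def arPart (m k : ℕ) : Multiset ℕ :=
  Multiset.replicate (m % k) (m / k + 1) + Multiset.replicate (k - m % k) (m / k)

/-- Greedy decomposition of a weakly decreasing list of parts into maximal
almost rectangular segments from the top (fuel-driven helper). -/
def greedyGo : ℕ → List ℕ → List (List ℕ)
  | 0, _ => []
  | _ + 1, [] => []
  | n + 1, p :: rest =>
    ((p :: rest).takeWhile fun q => decide (p ≤ q + 1)) ::
      greedyGo n ((p :: rest).dropWhile fun q => decide (p ≤ q + 1))

/-- The greedy decomposition of a weakly decreasing list of parts into maximal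
almost rectangular subpartitions from the top. -/
def greedy (l : List ℕ) : List (List ℕ) := greedyGo l.length l

end Burge

/-!
Let all parts of `P` lie in `{q, q + 1}`, with `q + 1` occurring. The downward scan pairs `q + 1`
with `q` and finds nothing below, so `R(P) = {q + 1}`: `∂` lowers a single largest part by one, and
`P` is in class `B` exactly when `q = 0`. Raising a smallest part of `[n]^k` by one gives
`[n + 1]^k`, hence `∂([n + 1]^k) = [n]^k` with letter `α` as long as `n ≥ k`. After `m - k` steps
there remain `k` parts equal to `1`, which `∂` removes one at a time, each with letter `β`.
-/

lemma RsetGo_eq_empty {f : ℕ → ℕ} {n : ℕ} (hf : ∀ i, 0 < i → i ≤ n → f i = 0) :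
    RsetGo f n = ∅ := by
  induction n with
  | zero => rfl
  | succ n ih =>
    have h_top : f (n + 1) = 0 := hf (n + 1) n.succ_pos le_rfl
    have h_below : RsetGo f n = ∅ := ih fun i hi hin => hf i hi (Nat.le_succ_of_le hin)
    cases n <;> simp [RsetGo, h_top, h_below]

lemma RsetGo_succ_eq_singleton {f : ℕ → ℕ} {q : ℕ} (h_top : 0 < f (q + 1))
    (h_below : ∀ i, 0 < i → i < q → f i = 0) : RsetGo f (q + 1) = {q + 1} := by
  cases q with
  | zero => simp only [RsetGo, h_top, if_true]
  | succ q =>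
    rw [RsetGo, if_pos h_top,
      RsetGo_eq_empty fun i hi hiq => h_below i hi (Nat.lt_succ_of_le hiq), insert_empty_eq]

section PartsDifferingByAtMostOne

variable {q : ℕ} {S : Multiset ℕ}

lemma Rset_succ_cons (hS : ∀ i ∈ S, i ∈ Set.Icc q (q + 1)) :
    Rset ((q + 1) ::ₘ S) = {q + 1} := by
  have h_sup : ((q + 1) ::ₘ S).sup = q + 1 := by
    rw [Multiset.sup_cons]
    exact sup_eq_left.2 (Multiset.sup_le.2 fun i hi => (hS i hi).2)
  rw [Rset, h_sup]
  refine RsetGo_succ_eq_singleton (Multiset.count_pos.2 (Multiset.mem_cons_self _ _))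
    fun i _ hiq => Multiset.count_eq_zero.2 fun hi => ?_
  rcases Multiset.mem_cons.1 hi with rfl | hiS
  · omega
  · exact hiq.not_ge (hS i hiS).1

lemma dP_succ_cons (hS : ∀ i ∈ S, i ∈ Set.Icc q (q + 1)) :
    dP ((q + 1) ::ₘ S) = S + Multiset.filter (0 < ·) {q} := by
  simp only [dP, Rset_succ_cons hS, Finset.singleton_val, Multiset.map_singleton,
    Nat.add_sub_cancel, Multiset.sub_singleton, Multiset.erase_cons_head]

lemma dP_succ_cons_of_pos (hq : 0 < q) (hS : ∀ i ∈ S, i ∈ Set.Icc q (q + 1)) :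
    dP ((q + 1) ::ₘ S) = q ::ₘ S := by
  rw [dP_succ_cons hS, Multiset.filter_singleton, if_pos hq, add_comm, Multiset.singleton_add]

lemma dP_one_cons (hS : ∀ i ∈ S, i ≤ 1) : dP (1 ::ₘ S) = S := by
  have h := dP_succ_cons (q := 0) fun i hi => ⟨i.zero_le, hS i hi⟩
  simpa [Multiset.filter_singleton] using h

end PartsDifferingByAtMostOne

section BurgeCode

variable {q : ℕ} {S : Multiset ℕ}

lemma burgeCode_zero : burgeCode 0 = [false] := by
  simp [burgeCode, burgeGo]

-- When the size drops by exactly one, the fuel left over is the fuel `burgeCode (dP P)` asks for.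
lemma burgeCode_eq_cons {P : Multiset ℕ} (h : P.sum = (dP P).sum + 1) :
    burgeCode P = decide (1 ∈ Rset P) :: burgeCode (dP P) := by
  have hP : P ≠ 0 := by
    rintro rfl
    simp at h
  rw [burgeCode, h, burgeGo, if_neg hP, burgeCode]
  simp

lemma burgeCode_succ_cons_of_pos (hq : 0 < q) (hS : ∀ i ∈ S, i ∈ Set.Icc q (q + 1)) :
    burgeCode ((q + 1) ::ₘ S) = false :: burgeCode (q ::ₘ S) := by
  have h_dP : dP ((q + 1) ::ₘ S) = q ::ₘ S := dP_succ_cons_of_pos hq hS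
  have h_sum : ((q + 1) ::ₘ S).sum = (dP ((q + 1) ::ₘ S)).sum + 1 := by
    rw [h_dP, Multiset.sum_cons, Multiset.sum_cons, add_right_comm]
  rw [burgeCode_eq_cons h_sum, h_dP, Rset_succ_cons hS]
  simp [hq.ne']

lemma burgeCode_one_cons (hS : ∀ i ∈ S, i ≤ 1) :
    burgeCode (1 ::ₘ S) = true :: burgeCode S := by
  have h_dP : dP (1 ::ₘ S) = S := dP_one_cons hS
  have h_Rset : Rset (1 ::ₘ S) = {1} :=
    Rset_succ_cons (q := 0) fun i hi => ⟨i.zero_le, hS i hi⟩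
  have h_sum : (1 ::ₘ S).sum = (dP (1 ::ₘ S)).sum + 1 := by
    rw [h_dP, Multiset.sum_cons, add_comm]
  rw [burgeCode_eq_cons h_sum, h_dP, h_Rset]
  simp

lemma burgeCode_replicate_one (k : ℕ) :
    burgeCode (Multiset.replicate k 1) = List.replicate k true ++ [false] := by
  induction k with
  | zero => exact burgeCode_zero
  | succ k ih =>
    rw [Multiset.replicate_succ,
      burgeCode_one_cons fun i hi => (Multiset.eq_of_mem_replicate hi).le, ih,
      List.replicate_succ, List.cons_append]

end BurgeCode

section AlmostRectangular

variable {k : ℕ}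

-- The value `r = k` is allowed: division then gives quotient `q + 1` and remainder `0`.
lemma arPart_mul_add {r : ℕ} (hr : r ≤ k) (q : ℕ) :
    arPart (k * q + r) k = Multiset.replicate r (q + 1) + Multiset.replicate (k - r) q := by
  rcases hr.lt_or_eq with hlt | rfl
  · rw [arPart, Nat.mul_add_mod, Nat.mod_eq_of_lt hlt, Nat.mul_add_div (by omega),
      Nat.div_eq_of_lt hlt, add_zero]
  · rcases r.eq_zero_or_pos with rfl | hpos
    · simp [arPart]
    · rw [← Nat.mul_succ, arPart, Nat.mul_mod_right, Nat.mul_div_cancel_left _ hpos]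
      simp

lemma arPart_self (k : ℕ) : arPart k k = Multiset.replicate k 1 := by
  simpa using arPart_mul_add (le_refl k) 0

lemma exists_arPart_eq_cons (hk : 0 < k) (n : ℕ) :
    ∃ S : Multiset ℕ, (∀ i ∈ S, i ∈ Set.Icc (n / k) (n / k + 1)) ∧
      arPart n k = (n / k) ::ₘ S ∧ arPart (n + 1) k = (n / k + 1) ::ₘ S := by
  have hr : n % k < k := Nat.mod_lt n hk
  have hn : k * (n / k) + n % k = n := Nat.div_add_mod n k
  have h_card : k - n % k = k - (n % k + 1) + 1 := by omega
  refine ⟨Multiset.replicate (n % k) (n / k + 1) +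
    Multiset.replicate (k - (n % k + 1)) (n / k), fun i hi => ?_, ?_, ?_⟩
  · rcases Multiset.mem_add.1 hi with hi | hi <;>
      simp [Multiset.eq_of_mem_replicate hi]
  · rw [arPart, h_card, Multiset.replicate_succ, Multiset.add_cons]
  · have h := arPart_mul_add hr (n / k)
    rwa [Nat.succ_eq_add_one, ← add_assoc, hn, Multiset.replicate_succ, Multiset.cons_add] at h

lemma dP_arPart_succ (hk : 0 < k) {n : ℕ} (hkn : k ≤ n) :
    dP (arPart (n + 1) k) = arPart n k := by
  obtain ⟨S, hS, hn, hn_succ⟩ := exists_arPart_eq_cons hk n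
  rw [hn, hn_succ, dP_succ_cons_of_pos (Nat.div_pos hkn hk) hS]

lemma dP_iterate_arPart_add (hk : 0 < k) {n : ℕ} (hkn : k ≤ n) (j : ℕ) :
    dP^[j] (arPart (n + j) k) = arPart n k := by
  induction j with
  | zero => rfl
  | succ j ih =>
    rw [Function.iterate_succ_apply, ← add_assoc, dP_arPart_succ hk (Nat.le_add_right_of_le hkn),
      ih]

lemma burgeCode_arPart_succ (hk : 0 < k) {n : ℕ} (hkn : k ≤ n) :
    burgeCode (arPart (n + 1) k) = false :: burgeCode (arPart n k) := by
  obtain ⟨S, hS, hn, hn_succ⟩ := exists_arPart_eq_cons hk n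
  rw [hn, hn_succ, burgeCode_succ_cons_of_pos (Nat.div_pos hkn hk) hS]

lemma burgeCode_arPart_add (hk : 0 < k) {n : ℕ} (hkn : k ≤ n) (d : ℕ) :
    burgeCode (arPart (n + d) k) = List.replicate d false ++ burgeCode (arPart n k) := by
  induction d with
  | zero => rfl
  | succ d ih =>
    rw [← add_assoc, burgeCode_arPart_succ hk (Nat.le_add_right_of_le hkn), ih,
      List.replicate_succ, List.cons_append]

end AlmostRectangular

/-- For `m ≥ k ≥ 1`, `∂^j([m]^k) = [m−j]^k` for all `0 ≤ j ≤ m−k`, and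
the Burge code of the almost rectangular partition `[m]^k` is `α^{m−k} β^k α`.
(`false = α`, `true = β`.) -/
theorem statement10 (m k : ℕ) (hk : 1 ≤ k) (hkm : k ≤ m) :
    (∀ j ≤ m - k, dP^[j] (arPart m k) = arPart (m - j) k) ∧
    burgeCode (arPart m k) =
      List.replicate (m - k) false ++ List.replicate k true ++ [false] := by
  constructor
  · intro j hj
    have h_iterate := dP_iterate_arPart_add hk (show k ≤ m - j by omega) j
    rwa [Nat.sub_add_cancel (hj.trans (Nat.sub_le m k))] at h_iterate
  · have h_code := burgeCode_arPart_add hk le_rfl (m - k)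
    rwa [Nat.add_sub_cancel' hkm, arPart_self, burgeCode_replicate_one, ← List.append_assoc]
      at h_code
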